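/- arXiv:2303.14057 — 6 statements merged into one kernel-verified Lean document; each statement's English description precedes it below -/
import Mathlib

section
/- Let A be a subset of the odd positive integers and B a subset of the even positive integers, with 1 ∈ A, and suppose A ∪ B is odd-ended. Define the sequence (c_n) by (1 - Σ_{a∈A} x^a/a! + Σ_{b∈B} x^b/b!)^{-1} = Σ_{n≥0} c_n x^n/n! in the ring of formal power series over ℚ. Then c_n ≥ 0 for every n ≥ 0. -/
open scoped Classical

open Finset in
/-- auxiliary polynomial -/
noncomputable def GG (v h : ℕ → ℝ) (n s : ℕ) (t : ℝ) : ℝ :=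
  ∑ p ∈ antidiagonal n, v p.1 * h p.2 * (t ^ (p.1 + s) / ((p.1 + s).factorial : ℝ))

theorem hasDeriv_mono (k : ℕ) (t : ℝ) :
    HasDerivAt (fun t : ℝ => t ^ (k + 1) / ((k + 1).factorial : ℝ))
      (t ^ k / (k.factorial : ℝ)) t := by
  have := (hasDerivAt_pow (k + 1) t).div_const ((k + 1).factorial : ℝ)
  suffices e : t ^ k / (k.factorial : ℝ)
      = ((k + 1 : ℕ) : ℝ) * t ^ (k + 1 - 1) / ((k + 1).factorial : ℝ) by
    rw [e]; exact this
  rw [Nat.factorial_succ]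
  have : (k.factorial : ℝ) ≠ 0 := by positivity
  push_cast
  have h2 : (k : ℝ) + 1 ≠ 0 := by positivity
  field_simp

theorem GG_deriv_succ (v h : ℕ → ℝ) (n s : ℕ) (t : ℝ) :
    HasDerivAt (GG v h n (s + 1)) (GG v h n s t) t := by
  unfold GG
  apply HasDerivAt.fun_sum
  intro p _
  exact (hasDeriv_mono (p.1 + s) t).const_mul _

theorem GG_zero_succ (v h : ℕ → ℝ) (n s : ℕ) : GG v h n (s + 1) 0 = 0 := by
  unfold GG
  apply Finset.sum_eq_zero
  intro p _
  simp [← add_assoc]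

theorem GG_nonneg_of (v h : ℕ → ℝ) (n : ℕ) (H : ∀ t ∈ Set.Icc (0 : ℝ) 1, 0 ≤ GG v h n 0 t)
    (s : ℕ) : ∀ t ∈ Set.Icc (0 : ℝ) 1, 0 ≤ GG v h n s t := by
  induction s with
  | zero => exact H
  | succ s ih =>
    have hm : MonotoneOn (GG v h n (s + 1)) (Set.Icc 0 1) := by
      apply monotoneOn_of_deriv_nonneg (convex_Icc 0 1)
      · exact fun x _ => (GG_deriv_succ v h n s x).continuousAt.continuousWithinAt
      · exact fun x _ => (GG_deriv_succ v h n s x).differentiableAt.differentiableWithinAt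
      · intro x hx
        rw [(GG_deriv_succ v h n s x).deriv]
        exact ih x (interior_subset hx)
    intro t ht
    have := hm (Set.left_mem_Icc.2 zero_le_one) ht ht.1
    rwa [GG_zero_succ] at this

open Finset in
theorem GG_deriv_zero (v h w : ℕ → ℝ) (w0 : w 0 = 1)
    (hw : ∀ n, ∑ p ∈ antidiagonal (n + 1), w p.1 * v p.2 = 0) (n : ℕ) (t : ℝ) :
    HasDerivAt (GG v h (n + 1) 0)
      (-∑ q ∈ antidiagonal n, w (q.1 + 1) * GG v h q.2 q.1 t) t := by
  have e : (-∑ q ∈ antidiagonal n, w (q.1 + 1) * GG v h q.2 q.1 t)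
      = ∑ q ∈ antidiagonal n, v (q.1 + 1) * h q.2 * (t ^ q.1 / (q.1.factorial : ℝ)) := by
    have e1 : ∑ q ∈ antidiagonal n, w (q.1 + 1) * GG v h q.2 q.1 t
      = ∑ q ∈ antidiagonal n, ∑ p ∈ antidiagonal q.1,
        w (p.1 + 1) * v p.2 * h q.2 * (t ^ q.1 / (q.1.factorial : ℝ)) := by
      unfold GG
      simp_rw [mul_sum]
      rw [sum_sigma', sum_sigma']
      refine sum_nbij' (fun x => ⟨(x.1.1 + x.2.1, x.2.2), (x.1.1, x.2.1)⟩)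
        (fun x => ⟨(x.2.1, x.2.2 + x.1.2), (x.2.2, x.1.2)⟩) ?_ ?_ ?_ ?_ ?_
      · rintro ⟨⟨a, b⟩, ⟨c, d⟩⟩ hx
        simp at hx ⊢
        omega
      · rintro ⟨⟨a, b⟩, ⟨c, d⟩⟩ hx
        simp at hx ⊢
        omega
      · rintro ⟨⟨a, b⟩, ⟨c, d⟩⟩ hx
        simp at hx ⊢
        omega
      · rintro ⟨⟨a, b⟩, ⟨c, d⟩⟩ hx
        simp at hx ⊢
        omega
      · rintro ⟨⟨a, b⟩, ⟨c, d⟩⟩ hx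
        simp only [add_comm c a]
        ring
    rw [e1, ← sum_neg_distrib]
    apply sum_congr rfl
    intro q _
    have := hw q.1
    rw [Nat.antidiagonal_succ] at this
    simp [w0] at this
    simp_rw [← sum_mul]
    have : v (q.1 + 1) = - ∑ x ∈ antidiagonal q.1, w (x.1 + 1) * v x.2 := by linarith
    rw [this]; ring
  rw [e]
  have e2 : GG v h (n + 1) 0 = fun t => v 0 * h (n + 1) +
      ∑ q ∈ antidiagonal n, v (q.1 + 1) * h q.2 * (t ^ (q.1 + 1) / ((q.1 + 1).factorial : ℝ)) := by
    funext t
    unfold GG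
    rw [Nat.antidiagonal_succ]
    simp
  rw [e2]
  apply HasDerivAt.const_add
  apply HasDerivAt.fun_sum
  intro p _
  exact (hasDeriv_mono p.1 t).const_mul _

open Finset in
theorem GG_nonneg (v h w : ℕ → ℝ) (w0 : w 0 = 1) (wn : ∀ n, 0 ≤ w n)
    (hw : ∀ n, ∑ p ∈ antidiagonal (n + 1), w p.1 * v p.2 = 0)
    (h0 : 0 ≤ v 0 * h 0) (hG : ∀ n, GG v h (n + 1) 0 1 = 0) (n : ℕ) :
    ∀ t ∈ Set.Icc (0 : ℝ) 1, 0 ≤ GG v h n 0 t := by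
  induction n using Nat.strong_induction_on with
  | _ n ih =>
    rcases n with _ | n
    · intro t _
      simpa [GG] using h0
    · have hd := GG_deriv_zero v h w w0 hw n
      have hm : AntitoneOn (GG v h (n + 1) 0) (Set.Icc 0 1) := by
        apply antitoneOn_of_deriv_nonpos (convex_Icc 0 1)
        · exact fun x _ => (hd x).continuousAt.continuousWithinAt
        · exact fun x _ => (hd x).differentiableAt.differentiableWithinAt
        · intro x hx
          rw [(hd x).deriv, neg_nonpos]
          apply sum_nonneg
          intro q hq
          have : q.2 < n + 1 := by
            have := mem_antidiagonal.1 hq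
            omega
          exact mul_nonneg (wn _) (GG_nonneg_of v h q.2 (ih _ this) _ x (interior_subset hx))
      intro t ht
      have := hm ht (Set.right_mem_Icc.2 zero_le_one) ht.2
      rwa [hG] at this

open PowerSeries in
theorem inv_coeff_nonneg (F : ℝ⟦X⟧) (h0 : constantCoeff F = 1)
    (hF : ∀ n, coeff (n + 1) F ≤ 0) (n : ℕ) : 0 ≤ coeff n F⁻¹ := by
  induction n using Nat.strong_induction_on with
  | _ n ih =>
    rw [coeff_inv]
    split_ifs with hn
    · simp [h0]
    · rw [h0]
      simp only [inv_one, neg_mul, one_mul, Left.nonneg_neg_iff]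
      apply Finset.sum_nonpos
      intro p hp
      split_ifs with h2
      · have : p.1 ≠ 0 := by
          have := Finset.HasAntidiagonal.mem_antidiagonal.1 hp
          omega
        obtain ⟨k, hk⟩ := Nat.exists_eq_succ_of_ne_zero this
        rw [hk]
        exact mul_nonpos_of_nonpos_of_nonneg (hF k) (ih _ h2)
      · exact le_rfl


open scoped Classical

/-- If `A` is a set of odd positive integers containing `1`, `B` a set of
even positive integers, and `A ∪ B` is odd-ended (for every `b ∈ B`, both `b - 1` and
`b + 1` lie in `A`), then the coefficients `c n` of the reciprocal of
`1 - ∑_{a ∈ A} x^a/a! + ∑_{b ∈ B} x^b/b!`, written as `∑ c_n x^n/n!`, are all nonnegative. -/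
theorem stmt0 (A B : Set ℕ)
    (hA : ∀ a ∈ A, Odd a ∧ 0 < a)
    (hB : ∀ b ∈ B, Even b ∧ 0 < b)
    (h1 : 1 ∈ A)
    (hOE : ∀ b ∈ B, b - 1 ∈ A ∧ b + 1 ∈ A)
    (c : ℕ → ℚ)
    (hc : (PowerSeries.mk fun n =>
          (if n = 0 then (1 : ℚ) else 0)
          - (if n ∈ A then (1 : ℚ) / n.factorial else 0)
          + (if n ∈ B then (1 : ℚ) / n.factorial else 0))⁻¹
        = PowerSeries.mk fun n => c n / n.factorial) :
    ∀ n, 0 ≤ c n := by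
  set v : ℕ → ℝ := fun n => (if n = 0 then 1 else 0) - (if n ∈ A then 1 else 0)
    + (if n ∈ B then 1 else 0) with hv
  have nA0 : 0 ∉ A := fun h => absurd (hA 0 h).2 (lt_irrefl 0)
  have nB0 : 0 ∉ B := fun h => absurd (hB 0 h).2 (lt_irrefl 0)
  have v0 : v 0 = 1 := by simp [hv, nA0, nB0]
  have nB1 : 1 ∉ B := fun h => by have := (hB 1 h).1; revert this; decide
  have v1 : v 1 = -1 := by simp [hv, h1, nB1]
  have vs : ∀ n, v (n + 1) + v n ≤ 0 := by
    intro n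
    rcases n with _ | n
    · simp [v0, v1]
    · simp only [hv]
      have a1 : n + 1 ∈ A → n + 1 + 1 ∉ A := by
        intro h h'
        have := (hA _ h).1; have := (hA _ h').1
        grind
      have b1 : n + 1 + 1 ∈ B → n + 1 + 1 ∉ A ∧ n + 1 ∉ B ∧ n + 1 ∈ A := by
        intro h
        have e := (hB _ h).1
        refine ⟨fun h' => ?_, fun h' => ?_, (hOE _ h).1⟩
        · have := (hA _ h').1; grind
        · have := (hB _ h').1; grind
      have b2 : n + 1 ∈ B → n + 1 + 1 ∈ A := fun h => (hOE _ h).2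
      by_cases p1 : n + 1 + 1 ∈ B
      · obtain ⟨x, y, z⟩ := b1 p1
        simp [p1, x, y, z]
      · by_cases p2 : n + 1 ∈ B
        · have x := b2 p2
          have : n + 1 ∉ A := fun h => a1 h x
          simp [p1, p2, x, this]
        · simp [p1, p2]
          split_ifs <;> norm_num
  set V : PowerSeries ℝ := PowerSeries.mk v with hV
  set F : PowerSeries ℝ := (1 + PowerSeries.X) * V with hF
  have F0 : PowerSeries.constantCoeff F = 1 := by
    simp [hF, hV, v0]
  have Fn : ∀ n, PowerSeries.coeff (n + 1) F ≤ 0 := by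
    intro n
    have := vs n
    simpa [hF, hV, add_mul, PowerSeries.coeff_succ_X_mul] using this
  have hq := inv_coeff_nonneg F F0 Fn
  set W : PowerSeries ℝ := (1 + PowerSeries.X) * F⁻¹ with hW
  have WV : W * V = 1 := by
    have : F * F⁻¹ = 1 := PowerSeries.mul_inv_cancel F (by rw [F0]; exact one_ne_zero)
    rw [← this, hW]
    rw [hF]; ring
  have wn : ∀ n, 0 ≤ PowerSeries.coeff n W := by
    intro n
    rcases n with _ | n
    · simp [hW, F0]
    · simp only [hW, add_mul, one_mul, map_add, PowerSeries.coeff_succ_X_mul]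
      exact add_nonneg (hq _) (hq _)
  have hw : ∀ n, ∑ p ∈ Finset.HasAntidiagonal.antidiagonal (n + 1), PowerSeries.coeff p.1 W * v p.2 = 0 := by
    intro n
    have := congrArg (PowerSeries.coeff (n + 1)) WV
    rw [PowerSeries.coeff_mul] at this
    simpa [hV, PowerSeries.coeff_one] using this
  have w0 : PowerSeries.coeff 0 W = 1 := by simp [hW, F0]
  set E : PowerSeries ℚ := PowerSeries.mk fun n =>
          (if n = 0 then (1 : ℚ) else 0)
          - (if n ∈ A then (1 : ℚ) / n.factorial else 0)
          + (if n ∈ B then (1 : ℚ) / n.factorial else 0) with hE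
  have E0 : PowerSeries.constantCoeff E = 1 := by
    simp [hE, nA0, nB0]
  have EI : E * PowerSeries.mk (fun n => c n / n.factorial) = 1 := by
    rw [← hc]
    exact PowerSeries.mul_inv_cancel E (by rw [E0]; exact one_ne_zero)
  set h : ℕ → ℝ := fun n => ((c n / n.factorial : ℚ) : ℝ) with hh
  have key : ∀ n, GG v h n 0 1 = if n = 0 then 1 else 0 := by
    intro n
    have := congrArg (PowerSeries.coeff n) EI
    rw [PowerSeries.coeff_mul, PowerSeries.coeff_one] at this
    have := congrArg (Rat.cast : ℚ → ℝ) this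
    have e : (((if n = 0 then 1 else 0 : ℚ)) : ℝ) = if n = 0 then 1 else 0 := by
      split_ifs <;> simp
    rw [e] at this
    rw [← this]
    unfold GG
    rw [Rat.cast_sum]
    apply Finset.sum_congr rfl
    intro p _
    simp only [hE, hv, hh, PowerSeries.coeff_mk]
    by_cases p0 : p.1 = 0
    · simp [p0, nA0, nB0]
    · by_cases pa : p.1 ∈ A <;> by_cases pb : p.1 ∈ B <;> simp [p0, pa, pb] <;> ring
  have k0 := key 0
  simp [GG] at k0
  intro n
  have := GG_nonneg v h (fun n => PowerSeries.coeff n W) w0 wn hw (by rw [k0]; exact zero_le_one)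
    (fun n => by simp [key]) n 0 (by simp)
  have e : GG v h n 0 0 = h n := by
    unfold GG
    rw [Finset.sum_eq_single (0, n)]
    · simp [v0]
    · intro p hp hne
      have : p.1 ≠ 0 := by
        intro h
        apply hne
        have := Finset.HasAntidiagonal.mem_antidiagonal.1 hp
        ext <;> simp <;> omega
      simp [this]
    · simp
  rw [e] at this
  have h2 : (0 : ℚ) ≤ c n / n.factorial := Rat.cast_nonneg.1 this
  have h3 : (0 : ℚ) < n.factorial := by positivity
  have := mul_nonneg h2 h3.le
  rwa [div_mul_cancel₀ _ h3.ne'] at this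
end

section
/- Let b ≥ 1 and r ≥ 2 be integers, let O* = {(kr+1)b : k ≥ 0} and E* = {krb : k ≥ 1}, and let A ⊆ O* and B ⊆ E* with b ∈ A, such that for every k ≥ 1 with krb ∈ B, both (kr+1)b ∈ A and ((k-1)r+1)b ∈ A (i.e. A ∪ B is odd-ended in the stretched sense). Define (c_n) by (1 - Σ_{a∈A} x^a/a! + Σ_{m∈B} x^m/m!)^{-1} = Σ_{n≥0} c_n x^n/n! in ℚ[[x]]. Then c_n ≥ 0 for every n ≥ 0. -/
open scoped Classical

open PowerSeries in
lemma nn_mul {F G : PowerSeries ℚ} (hF : ∀ n, 0 ≤ coeff n F) (hG : ∀ n, 0 ≤ coeff n G) :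
    ∀ n, 0 ≤ coeff n (F * G) := by
  intro n
  rw [coeff_mul]
  exact Finset.sum_nonneg fun p _ => mul_nonneg (hF _) (hG _)

open PowerSeries in
lemma nn_fix {F H : PowerSeries ℚ} (hH : ∀ n, 0 ≤ coeff n H) (h0 : coeff 0 H = 0)
    (hF : F = 1 + H * F) : ∀ n, 0 ≤ coeff n F := by
  intro n
  induction n using Nat.strong_induction_on with
  | _ n ih =>
    rw [hF, map_add, coeff_mul]
    refine add_nonneg (by rw [coeff_one]; split_ifs <;> norm_num) (Finset.sum_nonneg ?_)
    rintro ⟨i, j⟩ hp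
    rw [Finset.HasAntidiagonal.mem_antidiagonal] at hp
    simp only at hp ⊢
    rcases Nat.eq_zero_or_pos i with rfl | hi
    · rw [h0]; simp
    · exact mul_nonneg (hH _) (ih j (by omega))

open PowerSeries in
lemma run_nonneg (v w : ℕ → ℚ) (hw : ∀ n, 0 ≤ w n) (hv0 : v 0 = 1)
    (hwv : PowerSeries.mk w * PowerSeries.mk v = 1) (C : PowerSeries ℚ)
    (hC : C * PowerSeries.mk (fun n => v n / n.factorial) = 1) :
    ∀ n, 0 ≤ coeff n C := by
  set V := PowerSeries.mk (fun n => v n / n.factorial) with hV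
  let G : ℕ → PowerSeries ℚ := fun j => PowerSeries.mk fun n =>
    (-∑ i ∈ Finset.range (j + 1), w i * v (j + 1 - i + n)) / n.factorial
  have hG0 : ∀ j, coeff 0 (G j) = w (j + 1) := by
    intro j
    have h := congrArg (coeff (j + 1)) hwv
    rw [coeff_mul, Finset.Nat.sum_antidiagonal_eq_sum_range_succ_mk, Finset.sum_range_succ] at h
    simp only [coeff_mk, Nat.sub_self, hv0, coeff_one] at h
    simp only [G, coeff_mk, Nat.factorial_zero, Nat.cast_one, div_one, add_zero]
    simp at h
    linarith
  have hw0 : w 0 = 1 := by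
    have h := congrArg (coeff 0) hwv
    rw [coeff_mul] at h
    simpa [hv0] using h
  have hGd : ∀ j, d⁄dX ℚ (G j) = G (j + 1) - PowerSeries.C (w (j + 1)) * G 0 := by
    intro j
    ext n
    rw [coeff_derivative, map_sub, coeff_C_mul]
    simp only [G, coeff_mk]
    rw [Finset.sum_range_succ _ (j + 1)]
    have e : ∑ i ∈ Finset.range (j + 1), w i * v (j + 1 - i + (n + 1))
        = ∑ i ∈ Finset.range (j + 1), w i * v (j + 1 + 1 - i + n) := by
      refine Finset.sum_congr rfl fun i hi => ?_
      rw [Finset.mem_range] at hi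
      congr 2; omega
    rw [e, Nat.factorial_succ]
    have h1 : (n.factorial : ℚ) ≠ 0 := by positivity
    have h2 : (n : ℚ) + 1 ≠ 0 := by positivity
    have h3 : j + 1 + 1 - (j + 1) + n = 0 + 1 - 0 + n := by omega
    rw [h3]
    push_cast
    simp only [zero_add, Finset.sum_range_one, hw0]
    field_simp
    ring
  have hVd : d⁄dX ℚ V = - G 0 := by
    ext n
    rw [coeff_derivative, map_neg]
    simp only [G, hV, coeff_mk]
    rw [Nat.factorial_succ]
    have h1 : (n.factorial : ℚ) ≠ 0 := by positivity
    have h2 : (n : ℚ) + 1 ≠ 0 := by positivity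
    push_cast
    simp only [zero_add, Finset.sum_range_one, hw0, Nat.sub_zero, add_comm 1 n]
    field_simp
  have hCd : d⁄dX ℚ C = (C * G 0) * C := by
    have h := congrArg (d⁄dX ℚ) hC
    rw [Derivation.leibniz, hVd] at h
    simp only [smul_eq_mul, Derivation.map_one_eq_zero] at h
    calc d⁄dX ℚ C = d⁄dX ℚ C * (C * V) := by rw [hC, mul_one]
      _ = C * (V * d⁄dX ℚ C) := by ring
      _ = _ := by rw [eq_neg_of_add_eq_zero_right h]; ring
  have hC0 : coeff 0 C = 1 := by
    have h := congrArg (coeff 0) hC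
    rw [coeff_mul] at h
    simpa [hV, hv0] using h
  have hFd : ∀ j, d⁄dX ℚ (C * G j)
      = (C * G 0) * (C * G j - PowerSeries.C (w (j + 1))) + C * G (j + 1) := by
    intro j
    rw [Derivation.leibniz, hCd, hGd]
    simp only [smul_eq_mul]
    ring
  have hF0 : ∀ j, coeff 0 (C * G j) = w (j + 1) := by
    intro j
    rw [coeff_mul]
    simp [hC0, hG0, -coeff_zero_eq_constantCoeff]
  have hF : ∀ n j, 0 ≤ coeff n (C * G j) := by
    intro n
    induction n using Nat.strong_induction_on with
    | _ n ih =>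
      intro j
      rcases n with _ | n
      · rw [hF0]; exact hw _
      · have h := congrArg (coeff n) (hFd j)
        rw [coeff_derivative, map_add, coeff_mul n] at h
        have : 0 ≤ coeff (n + 1) (C * G j) * ((n : ℚ) + 1) := by
          rw [h]
          refine add_nonneg (Finset.sum_nonneg ?_) (ih n (by omega) _)
          rintro ⟨a, b⟩ hp
          rw [Finset.HasAntidiagonal.mem_antidiagonal] at hp
          simp only at hp ⊢
          refine mul_nonneg (ih a (by omega) 0) ?_
          rw [map_sub, coeff_C]
          split_ifs with hb
          · rw [hb, hF0, sub_self]
          · rw [sub_zero]; exact ih b (by omega) j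
        exact nonneg_of_mul_nonneg_left this (by positivity)
  intro n
  induction n using Nat.strong_induction_on with
  | _ n ih =>
    rcases n with _ | n
    · rw [hC0]; norm_num
    · have h := congrArg (coeff n) hCd
      rw [coeff_derivative, coeff_mul] at h
      have : 0 ≤ coeff (n + 1) C * ((n : ℚ) + 1) := by
        rw [h]
        refine Finset.sum_nonneg ?_
        rintro ⟨a, b⟩ hp
        rw [Finset.HasAntidiagonal.mem_antidiagonal] at hp
        simp only at hp ⊢
        exact mul_nonneg (hF a 0) (ih b (by omega))
      exact nonneg_of_mul_nonneg_left this (by positivity)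

/-- stretched version. For `b ≥ 1`, `r ≥ 2`, `A` a subset of the stretched
odds `{(kr+1)b : k ≥ 0}` containing `b`, `B` a subset of the stretched evens `{krb : k ≥ 1}`,
with `A ∪ B` odd-ended in the stretched sense, the coefficients `c n` of the reciprocal of
`1 - ∑_{a ∈ A} x^a/a! + ∑_{m ∈ B} x^m/m!`, written as `∑ c_n x^n/n!`, are all nonnegative. -/
theorem stmt1 (b r : ℕ) (hb : 1 ≤ b) (hr : 2 ≤ r)
    (A B : Set ℕ)
    (hA : ∀ a ∈ A, ∃ k : ℕ, a = (k * r + 1) * b)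
    (hB : ∀ m ∈ B, ∃ k : ℕ, 1 ≤ k ∧ m = k * r * b)
    (hbA : b ∈ A)
    (hOE : ∀ k : ℕ, 1 ≤ k → k * r * b ∈ B →
      (k * r + 1) * b ∈ A ∧ ((k - 1) * r + 1) * b ∈ A)
    (c : ℕ → ℚ)
    (hc : (PowerSeries.mk fun n =>
          (if n = 0 then (1 : ℚ) else 0)
          - (if n ∈ A then (1 : ℚ) / n.factorial else 0)
          + (if n ∈ B then (1 : ℚ) / n.factorial else 0))⁻¹
        = PowerSeries.mk fun n => c n / n.factorial) :
    ∀ n, 0 ≤ c n := by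
  have hA0 : ∀ a ∈ A, b ≤ a := by
    intro a ha
    obtain ⟨k, rfl⟩ := hA a ha
    nlinarith [Nat.zero_le (k * r * b)]
  have hA0' : 0 ∉ A := fun h => by have := hA0 0 h; omega
  have hrb : 0 < r * b := by positivity
  have hB0 : 0 ∉ B := by
    intro h
    obtain ⟨k, hk, e⟩ := hB 0 h
    have : 0 < k * r * b := by positivity
    omega
  let v : ℕ → ℚ := fun n => (if n = 0 then (1 : ℚ) else 0)
    - (if n ∈ A then (1 : ℚ) else 0) + (if n ∈ B then (1 : ℚ) else 0)
  have hv0 : v 0 = 1 := by simp [v, hA0', hB0]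
  let Q : PowerSeries ℚ := PowerSeries.mk fun n => if n + b ∈ A then (1 : ℚ) else 0
  let P : PowerSeries ℚ := PowerSeries.mk fun n =>
    (if n = 0 then (1 : ℚ) else 0) + (if n ∈ B then (1 : ℚ) else 0)
  let N1 : PowerSeries ℚ := ∑ i ∈ Finset.range (r - 1), (PowerSeries.X ^ b) ^ (i + 1)
  have hD : PowerSeries.mk v = P - PowerSeries.X ^ b * Q := by
    ext n
    rw [map_sub, PowerSeries.coeff_X_pow_mul']
    simp only [v, P, Q, PowerSeries.coeff_mk]
    by_cases h : b ≤ n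
    · rw [if_pos h, Nat.sub_add_cancel h]; ring
    · rw [if_neg h, if_neg (fun hn => h (hA0 n hn))]; ring
  have hN : (1 + N1) * (1 - PowerSeries.X ^ b) = 1 - PowerSeries.X ^ (r * b) := by
    have e : 1 + N1 = ∑ i ∈ Finset.range r, ((PowerSeries.X : PowerSeries ℚ) ^ b) ^ i := by
      obtain ⟨s, rfl⟩ : ∃ s, r = s + 1 := ⟨r - 1, by omega⟩
      rw [Finset.sum_range_succ']
      simp only [N1, Nat.add_sub_cancel, pow_zero]
      ring
    rw [e, geom_sum_mul_neg, ← pow_mul, mul_comm b r]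
  have hN1 : ∀ n, 0 ≤ PowerSeries.coeff n N1 := by
    intro n
    simp only [N1, map_sum]
    refine Finset.sum_nonneg fun i _ => ?_
    rw [← pow_mul, PowerSeries.coeff_X_pow]
    split_ifs <;> norm_num
  have hN10 : PowerSeries.coeff 0 N1 = 0 := by
    simp only [N1, map_sum]
    refine Finset.sum_eq_zero fun i _ => ?_
    rw [← pow_mul, PowerSeries.coeff_X_pow, if_neg]
    have : 0 < b * (i + 1) := by positivity
    omega
  have hT : ∀ n, 0 ≤ PowerSeries.coeff n (Q - P) := by
    intro n
    simp only [map_sub, P, Q, PowerSeries.coeff_mk]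
    by_cases h0 : n = 0
    · subst h0; simp [hbA, hB0]
    · by_cases h1 : n ∈ B
      · obtain ⟨k, hk, rfl⟩ := hB n h1
        have := (hOE k hk h1).1
        rw [add_mul, one_mul] at this
        simp [h0, h1, this]
      · simp only [h0, h1, if_false]
        split_ifs <;> norm_num
  have hU : ∀ n, 0 ≤ PowerSeries.coeff n (PowerSeries.X ^ (r * b) * Q - (P - 1)) := by
    intro n
    simp only [map_sub, PowerSeries.coeff_X_pow_mul', P, Q, PowerSeries.coeff_mk,
      PowerSeries.coeff_one]
    by_cases h1 : n ∈ B
    · obtain ⟨k, hk, rfl⟩ := hB n h1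
      have := (hOE k hk h1).2
      obtain ⟨s, rfl⟩ : ∃ s, k = s + 1 := ⟨k - 1, by omega⟩
      have e1 : (s + 1) * r * b = s * r * b + r * b := by ring
      have e2 : (s + 1 - 1) * r * b + b = (s + 1 - 1) * r * b + b := rfl
      rw [if_pos (by omega : r * b ≤ (s + 1) * r * b)]
      have e3 : (s + 1) * r * b - r * b + b = (s + 1 - 1 : ℕ) * r * b + b := by
        rw [e1]; simp
      rw [add_mul, one_mul] at this
      rw [e3, if_pos this, if_pos h1]
      linarith
    · simp only [h1, if_false]
      split_ifs <;> norm_num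
  let H : PowerSeries ℚ := PowerSeries.X ^ (r * b) * Q - (P - 1) + N1 * (Q - P)
  have hHn : ∀ n, 0 ≤ PowerSeries.coeff n H := by
    intro n
    simp only [H]
    rw [map_add]
    exact add_nonneg (hU n) (nn_mul hN1 hT n)
  have hH0 : PowerSeries.coeff 0 H = 0 := by
    simp only [H]
    rw [map_add, map_sub, map_sub, PowerSeries.coeff_X_pow_mul', if_neg (by omega),
      PowerSeries.coeff_mul]
    simp [hN10, P, hB0, -PowerSeries.coeff_zero_eq_constantCoeff]
  have hDN : PowerSeries.mk v * (1 + N1) = 1 - H := by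
    rw [hD]
    simp only [H]
    linear_combination Q * hN
  have hinv : (1 - H) * (1 - H)⁻¹ = 1 := by
    apply PowerSeries.mul_inv_cancel
    rw [← PowerSeries.coeff_zero_eq_constantCoeff_apply, map_sub, hH0]
    simp
  have hFn : ∀ n, 0 ≤ PowerSeries.coeff n ((1 - H)⁻¹) :=
    nn_fix hHn hH0 (by linear_combination hinv)
  let W : PowerSeries ℚ := (1 + N1) * (1 - H)⁻¹
  have hWn : ∀ n, 0 ≤ PowerSeries.coeff n W := by
    refine nn_mul (fun n => ?_) hFn
    rw [map_add, PowerSeries.coeff_one]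
    refine add_nonneg ?_ (hN1 n)
    split_ifs <;> norm_num
  have hWv : PowerSeries.mk (fun n => PowerSeries.coeff n W) * PowerSeries.mk v = 1 := by
    have e : PowerSeries.mk (fun n => PowerSeries.coeff n W) = W := by
      ext n; simp
    rw [e]
    simp only [W]
    rw [← hDN] at hinv ⊢
    linear_combination hinv
  have hVeq : (PowerSeries.mk fun n =>
          (if n = 0 then (1 : ℚ) else 0)
          - (if n ∈ A then (1 : ℚ) / n.factorial else 0)
          + (if n ∈ B then (1 : ℚ) / n.factorial else 0))
      = PowerSeries.mk (fun n => v n / n.factorial) := by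
    ext n
    simp only [PowerSeries.coeff_mk, v]
    by_cases h0 : n = 0
    · subst h0; simp
    · simp only [h0, if_false]
      split_ifs <;> ring
  rw [hVeq] at hc
  have hC : (PowerSeries.mk fun n => c n / n.factorial) *
      PowerSeries.mk (fun n => v n / n.factorial) = 1 := by
    rw [← hc]
    apply PowerSeries.inv_mul_cancel
    rw [← PowerSeries.coeff_zero_eq_constantCoeff_apply]
    simp [hv0, -PowerSeries.coeff_zero_eq_constantCoeff]
  intro n
  have h := run_nonneg v (fun n => PowerSeries.coeff n W) hWn hv0 hWv _ hC n
  rw [PowerSeries.coeff_mk] at h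
  have hf : (0 : ℚ) < n.factorial := by positivity
  have := mul_nonneg h hf.le
  rwa [div_mul_cancel₀ _ hf.ne'] at this
end

section
/- Let A be a subset of the odd positive integers and B a subset of the even positive integers with 1 ∈ A. Define (c_n) by (1 - Σ_{a∈A} x^a/a! + Σ_{b∈B} x^b/b!)^{-1} = Σ_{n≥0} c_n x^n/n! in ℚ[[x]]. If the smallest positive integer not in A ∪ B is the odd number 2m+1 (for some positive integer m), then c_{2m+2} < 0. -/
open scoped Classical

/-- If `A` is a set of odd positive integers containing `1` and `B` a set of
even positive integers, and the smallest positive integer not in `A ∪ B` is the odd number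
`2m + 1` (for some `m ≥ 1`), then the coefficient `c (2m+2)` of the reciprocal of
`1 - ∑_{a ∈ A} x^a/a! + ∑_{b ∈ B} x^b/b!`, written as `∑ c_n x^n/n!`, is negative. -/
theorem stmt2 (A B : Set ℕ)
    (hA : ∀ a ∈ A, Odd a ∧ 0 < a)
    (hB : ∀ b ∈ B, Even b ∧ 0 < b)
    (h1 : 1 ∈ A)
    (m : ℕ) (hm : 1 ≤ m)
    (hmiss : 2 * m + 1 ∉ A ∪ B)
    (hbelow : ∀ j, 1 ≤ j → j ≤ 2 * m → j ∈ A ∪ B)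
    (c : ℕ → ℚ)
    (hc : (PowerSeries.mk fun n =>
          (if n = 0 then (1 : ℚ) else 0)
          - (if n ∈ A then (1 : ℚ) / n.factorial else 0)
          + (if n ∈ B then (1 : ℚ) / n.factorial else 0))⁻¹
        = PowerSeries.mk fun n => c n / n.factorial) :
    c (2 * m + 2) < 0 := by
  set F : PowerSeries ℚ := PowerSeries.mk fun n =>
          (if n = 0 then (1 : ℚ) else 0)
          - (if n ∈ A then (1 : ℚ) / n.factorial else 0)
          + (if n ∈ B then (1 : ℚ) / n.factorial else 0) with hF
  have hAB : ∀ n, n ∈ A → n ∉ B := fun n ha hb => by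
    have h1 := (hA n ha).1
    have h2 := (hB n hb).1
    exact (Nat.not_even_iff_odd.mpr h1) h2
  have hF0 : PowerSeries.constantCoeff F = 1 := by
    have a0 : 0 ∉ A := fun h => absurd (hA 0 h).2 (lt_irrefl _)
    have b0 : 0 ∉ B := fun h => absurd (hB 0 h).2 (lt_irrefl _)
    rw [← PowerSeries.coeff_zero_eq_constantCoeff_apply, hF, PowerSeries.coeff_mk]
    simp [a0, b0]
  set G : PowerSeries ℚ := PowerSeries.mk fun n => c n / n.factorial with hG
  have hFG : F * G = 1 := by
    rw [← hc]
    exact PowerSeries.mul_inv_cancel _ (by rw [hF0]; exact one_ne_zero)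
  set E' : PowerSeries ℚ := PowerSeries.evalNegHom (PowerSeries.exp ℚ) with hE'
  have hcE : ∀ n, PowerSeries.coeff n E' = (-1) ^ n / n.factorial := by
    intro n
    simp [hE', PowerSeries.evalNegHom, PowerSeries.coeff_rescale, PowerSeries.coeff_exp, div_eq_mul_inv]
  have hEE : PowerSeries.exp ℚ * E' = 1 := PowerSeries.exp_mul_exp_neg_eq_one
  set H : PowerSeries ℚ := PowerSeries.mk fun k => PowerSeries.coeff (k + (2*m+1)) (F - E') with hH
  have hdec : F = E' + PowerSeries.X ^ (2*m+1) * H := by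
    ext n
    rw [map_add, PowerSeries.coeff_X_pow_mul']
    split_ifs with hn
    · have hx : PowerSeries.coeff (n - (2*m+1)) H = PowerSeries.coeff n (F - E') := by
        rw [hH, PowerSeries.coeff_mk, Nat.sub_add_cancel hn]
      rw [hx, map_sub]; ring
    · rw [hcE, hF, PowerSeries.coeff_mk, add_zero]
      rcases Nat.eq_zero_or_pos n with h0 | h0
      · subst h0
        have := hF0
        rw [← PowerSeries.coeff_zero_eq_constantCoeff_apply, hF, PowerSeries.coeff_mk] at this
        rw [this]; simp
      · rcases hbelow n h0 (by omega) with h | h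
        · rw [if_neg h0.ne', if_pos h, if_neg (hAB n h), (hA n h).1.neg_one_pow]; ring
        · rw [if_neg h0.ne', if_pos h, if_neg (fun h' => hAB n h' h), (hB n h).1.neg_one_pow]; ring
  have key : PowerSeries.exp ℚ = G + PowerSeries.X ^ (2*m+1) * (PowerSeries.exp ℚ * H * G) := by
    calc PowerSeries.exp ℚ = PowerSeries.exp ℚ * (F * G) := by rw [hFG, mul_one]
      _ = (PowerSeries.exp ℚ * E') * G + PowerSeries.X ^ (2*m+1) * (PowerSeries.exp ℚ * H * G) := by
        rw [hdec]; ring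
      _ = _ := by rw [hEE, one_mul]
  have k0 := congrArg (PowerSeries.coeff 0) key
  have k1 := congrArg (PowerSeries.coeff 1) key
  have k2 := congrArg (PowerSeries.coeff (2*m+2)) key
  rw [map_add, PowerSeries.coeff_X_pow_mul', if_neg (by omega), PowerSeries.coeff_exp] at k0
  rw [map_add, PowerSeries.coeff_X_pow_mul', if_neg (by omega), PowerSeries.coeff_exp] at k1
  rw [map_add, PowerSeries.coeff_X_pow_mul', if_pos (by omega), PowerSeries.coeff_exp,
    show 2*m+2-(2*m+1) = 1 by omega] at k2
  have hH0 : PowerSeries.coeff 0 H = 1 / ((2*m+1).factorial : ℚ) := by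
    have ha : 2*m+1 ∉ A := fun h => hmiss (Or.inl h)
    have hb : 2*m+1 ∉ B := fun h => hmiss (Or.inr h)
    have ho : Odd (2*m+1) := ⟨m, rfl⟩
    rw [hH, PowerSeries.coeff_mk, zero_add, map_sub, hcE, hF, PowerSeries.coeff_mk, if_neg ha, if_neg hb,
      if_neg (by omega), ho.neg_one_pow]
    ring
  have hH1 : -1 / ((2*m+2).factorial : ℚ) ≤ PowerSeries.coeff 1 H := by
    have he : Even (2*m+2) := ⟨m+1, by ring⟩
    have ha : 2*m+2 ∉ A := fun h => (Nat.not_even_iff_odd.mpr (hA _ h).1) he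
    have : (0:ℚ) ≤ 1 / ((2*m+2).factorial : ℚ) := by positivity
    rw [hH, PowerSeries.coeff_mk, show 1 + (2*m+1) = 2*m+2 by ring, map_sub, hcE, hF, PowerSeries.coeff_mk,
      if_neg ha, if_neg (by omega), he.neg_one_pow]
    rw [neg_div]
    split_ifs <;> linarith
  have hG2 : PowerSeries.coeff (2*m+2) G = c (2*m+2) / ((2*m+2).factorial : ℚ) := by
    rw [hG, PowerSeries.coeff_mk]
  have hm1 : PowerSeries.coeff 1 (PowerSeries.exp ℚ * H * G)
      = PowerSeries.coeff 1 H + 2 * PowerSeries.coeff 0 H := by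
    have e0 : PowerSeries.coeff 0 G = 1 := by simpa using k0.symm
    have e1 : PowerSeries.coeff 1 G = 1 := by simpa using k1.symm
    have x0 : PowerSeries.coeff 0 (PowerSeries.exp ℚ) = 1 := by simp [PowerSeries.coeff_exp]
    have x1 : PowerSeries.coeff 1 (PowerSeries.exp ℚ) = 1 := by simp [PowerSeries.coeff_exp]
    have anti : Finset.HasAntidiagonal.antidiagonal 1 = {((0:ℕ),(1:ℕ)),(1,0)} := rfl
    have anti0 : Finset.HasAntidiagonal.antidiagonal 0 = {((0:ℕ),(0:ℕ))} := rfl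
    have p1 : ∀ P Q : PowerSeries ℚ, PowerSeries.coeff 1 (P * Q) =
        PowerSeries.coeff 0 P * PowerSeries.coeff 1 Q + PowerSeries.coeff 1 P * PowerSeries.coeff 0 Q := by
      intro P Q
      rw [PowerSeries.coeff_mul, anti, Finset.sum_pair (by decide)]
    have p0 : ∀ P Q : PowerSeries ℚ, PowerSeries.coeff 0 (P * Q) =
        PowerSeries.coeff 0 P * PowerSeries.coeff 0 Q := by
      intro P Q
      rw [PowerSeries.coeff_mul, anti0, Finset.sum_singleton]
    rw [p1, p1, p0, e0, e1, x0, x1]; ring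
  have hf : ((2*m+2).factorial : ℚ) = (2*m+2) * ((2*m+1).factorial : ℚ) := by
    rw [Nat.factorial_succ]; push_cast; ring
  have hfp : (0:ℚ) < ((2*m+1).factorial : ℚ) := by positivity
  have hfp2 : (0:ℚ) < ((2*m+2).factorial : ℚ) := by positivity
  have hH0' : PowerSeries.coeff 0 H = (2*m+2) / ((2*m+2).factorial : ℚ) := by
    rw [hH0, hf]; field_simp
  rw [hm1, hG2, hH0'] at k2
  simp only [eq_ratCast, Rat.cast_id, Algebra.algebraMap_self, RingHom.id_apply] at k2
  have hfin : c (2*m+2) / ((2*m+2).factorial : ℚ) ≤ (2 - 2 * (2*m+2)) / ((2*m+2).factorial : ℚ) := by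
    have : (2 - 2 * (2*m+2)) / ((2*m+2).factorial : ℚ) = 1 / ((2*m+2).factorial : ℚ)
      - (-1 / ((2*m+2).factorial : ℚ) + 2 * ((2*m+2) / ((2*m+2).factorial : ℚ))) := by ring
    linarith
  have hle := (div_le_div_iff_of_pos_right hfp2).mp hfin
  have hmq : (1:ℚ) ≤ m := by exact_mod_cast hm
  linarith
end

section
/- Let m be a positive integer, and let A = {1, 3, ..., 2m-1} and B = {2, 4, ..., 2m}, so that A ∪ B = {1, 2, ..., 2m}. Define (c_n) by (1 - Σ_{a∈A} x^a/a! + Σ_{b∈B} x^b/b!)^{-1} = Σ_{n≥0} c_n x^n/n! in ℚ[[x]]. Then c_{2m+2} = -2(2m+1). -/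
open scoped Classical

/-- For `m ≥ 1`, with `A = {1, 3, ..., 2m-1}` and `B = {2, 4, ..., 2m}`
(so `A ∪ B = {1, ..., 2m}`), the coefficient `c (2m+2)` of the reciprocal of
`1 - ∑_{a ∈ A} x^a/a! + ∑_{b ∈ B} x^b/b!`, written as `∑ c_n x^n/n!`, equals `-2(2m+1)`. -/
theorem stmt3 (m : ℕ) (hm : 1 ≤ m)
    (A B : Set ℕ)
    (hA : A = {j | Odd j ∧ j ≤ 2 * m})
    (hB : B = {j | Even j ∧ 0 < j ∧ j ≤ 2 * m})
    (c : ℕ → ℚ)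
    (hc : (PowerSeries.mk fun n =>
          (if n = 0 then (1 : ℚ) else 0)
          - (if n ∈ A then (1 : ℚ) / n.factorial else 0)
          + (if n ∈ B then (1 : ℚ) / n.factorial else 0))⁻¹
        = PowerSeries.mk fun n => c n / n.factorial) :
    c (2 * m + 2) = -2 * (2 * (m : ℚ) + 1) := by
  set F : PowerSeries ℚ := PowerSeries.mk fun n =>
          (if n = 0 then (1 : ℚ) else 0)
          - (if n ∈ A then (1 : ℚ) / n.factorial else 0)
          + (if n ∈ B then (1 : ℚ) / n.factorial else 0) with hF
  set G : PowerSeries ℚ := PowerSeries.mk fun n => c n / n.factorial with hG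
  have hF0 : PowerSeries.constantCoeff F ≠ 0 := by
    rw [← PowerSeries.coeff_zero_eq_constantCoeff_apply, hF, PowerSeries.coeff_mk]
    simp [hA, hB]
  have hFG : F * G = 1 := by rw [← hc]; exact PowerSeries.mul_inv_cancel F hF0
  obtain ⟨E, hE⟩ : ∃ E, E = PowerSeries.exp ℚ := ⟨_, rfl⟩
  obtain ⟨E', hE'⟩ : ∃ E', E' = PowerSeries.evalNegHom (PowerSeries.exp ℚ) := ⟨_, rfl⟩
  have hEE : E * E' = 1 := by
    rw [hE, hE']; exact PowerSeries.exp_mul_exp_neg_eq_one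
  have hcE : ∀ n, PowerSeries.coeff n E = 1 / (n.factorial : ℚ) := by
    intro n; rw [hE]; simp [PowerSeries.coeff_exp]
  have hcE' : ∀ n, PowerSeries.coeff n E' = (-1) ^ n / (n.factorial : ℚ) := by
    intro n
    rw [hE', PowerSeries.evalNegHom, PowerSeries.coeff_rescale]
    simp [PowerSeries.coeff_exp, div_eq_mul_inv]
  obtain ⟨R, hR⟩ : ∃ R : PowerSeries ℚ, R = PowerSeries.mk fun k =>
    -((-1) ^ (k + (2 * m + 1)) / ((k + (2 * m + 1)).factorial : ℚ)) := ⟨_, rfl⟩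
  have hFE : F = E' + PowerSeries.X ^ (2 * m + 1) * R := by
    ext n
    rw [map_add, hcE', PowerSeries.coeff_X_pow_mul', hF, PowerSeries.coeff_mk, hR]
    by_cases h : 2 * m + 1 ≤ n
    · have h1 : n ≠ 0 := by omega
      have h2 : ¬ n ≤ 2 * m := by omega
      rw [if_pos h, PowerSeries.coeff_mk, Nat.sub_add_cancel h]
      simp [hA, hB, h1, h2]
    · have h2 : n ≤ 2 * m := by omega
      rw [if_neg h]
      rcases Nat.eq_zero_or_pos n with rfl | h0
      · simp [hA, hB]
      · rcases Nat.even_or_odd n with he | ho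
        · have : ¬ Odd n := by simpa using he
          simp [hA, hB, h2, h0, h0.ne', he, this, he.neg_one_pow]
        · have : ¬ Even n := by simpa using ho
          simp [hA, hB, h2, h0, h0.ne', ho, this, ho.neg_one_pow, neg_div]
  have key : G = E - PowerSeries.X ^ (2 * m + 1) * (E * R * G) := by
    have : E * (F * G) = E := by rw [hFG, mul_one]
    rw [hFE] at this
    linear_combination this - G * hEE
  have hG0 : PowerSeries.coeff 0 G = 1 := by
    rw [key, map_sub, PowerSeries.coeff_X_pow_mul', if_neg (by omega), hcE]; simp
  have hG1 : PowerSeries.coeff 1 G = 1 := by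
    rw [key, map_sub, PowerSeries.coeff_X_pow_mul', if_neg (by omega), hcE]; simp
  have hR0 : PowerSeries.coeff 0 R = 1 / ((2 * m + 1).factorial : ℚ) := by
    rw [hR, PowerSeries.coeff_mk, zero_add, Odd.neg_one_pow ⟨m, rfl⟩]; ring
  have hR1 : PowerSeries.coeff 1 R = -1 / ((2 * m + 2).factorial : ℚ) := by
    rw [hR, PowerSeries.coeff_mk, show 1 + (2 * m + 1) = 2 * m + 2 by ring,
      Even.neg_one_pow ⟨m + 1, by ring⟩]; ring
  have hfin : PowerSeries.coeff (2 * m + 2) G = c (2 * m + 2) / ((2 * m + 2).factorial : ℚ) := by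
    rw [hG, PowerSeries.coeff_mk]
  have hanti : Finset.HasAntidiagonal.antidiagonal 1 = {((0 : ℕ), (1 : ℕ)), (1, 0)} := rfl
  have hanti0 : Finset.HasAntidiagonal.antidiagonal 0 = {((0 : ℕ), (0 : ℕ))} := rfl
  have h1 : PowerSeries.coeff 1 (E * R * G) =
      2 / ((2 * m + 1).factorial : ℚ) - 1 / ((2 * m + 2).factorial : ℚ) := by
    rw [PowerSeries.coeff_mul, hanti, Finset.sum_pair (by simp), hG0, hG1,
      PowerSeries.coeff_mul, PowerSeries.coeff_mul, hanti, hanti0, Finset.sum_pair (by simp),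
      Finset.sum_singleton, hR0, hR1, hcE, hcE]
    simp
    ring
  rw [key, map_sub, PowerSeries.coeff_X_pow_mul', if_pos (by omega), hcE,
    show 2 * m + 2 - (2 * m + 1) = 1 by omega, h1] at hfin
  have hf : ((2 * m + 2).factorial : ℚ) = (2 * m + 2) * ((2 * m + 1).factorial : ℚ) := by
    rw [Nat.factorial_succ (2 * m + 1)]; push_cast; ring
  have hpos : ((2 * m + 1).factorial : ℚ) ≠ 0 := by positivity
  have hpos2 : (2 * (m : ℚ) + 2) ≠ 0 := by positivity
  rw [hf] at hfin
  field_simp at hfin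
  linarith
end

section
/- Let F be a field of characteristic 0 and let (a_n)_{n≥0} be a sequence in F with a_0 = 1. Define (w_n)_{n≥0} by (Σ_{n≥0} a_n x^n)^{-1} = Σ_{n≥0} w_n x^n in F[[x]]. Then (Σ_{n≥0} a_n x^n/n!)^{-1} = Σ_{n≥0} b_n x^n/n!, where b_n = Σ_{L ⊨ n} w_L · β(L); here the sum is over all compositions L = (L_1, ..., L_k) of n, w_L = w_{L_1} ⋯ w_{L_k}, and β(L) is the number of permutations of {1, ..., n} whose run composition equals L. -/
/-- The composition of maximal increasing run lengths (read left to right) of the word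
`σ(1) σ(2) ⋯ σ(n)` associated to a permutation `σ` of `{1, ..., n}`. -/
def runComposition {n : ℕ} (σ : Equiv.Perm (Fin n)) : List ℕ :=
  ((List.ofFn fun i => σ i).splitBy fun a b => decide (a < b)).map List.length

/-- The number of permutations of `{1, ..., n}` whose run composition is `L`. -/
noncomputable def runCount {n : ℕ} (L : Composition n) : ℕ :=
  Nat.card {σ : Equiv.Perm (Fin n) // runComposition σ = L.blocks}

namespace RunThm

/-- weight of a list -/
def wt {F : Type*} [Field F] {α : Type*} [LinearOrder α] (w : ℕ → F) (l : List α) : F :=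
  (((l.splitBy fun a b => decide (a < b)).map List.length).map w).prod

/-- arrangements of a finset -/
def arr {α : Type*} (S : Finset α) : Finset (List α) :=
  ⟨Multiset.lists S.val, Multiset.lists_nodup_finset S⟩

theorem mem_arr {α : Type*} {S : Finset α} {l : List α} : l ∈ arr S ↔ S.val = (l : Multiset α) := by
  unfold arr
  rw [Finset.mem_mk, Multiset.mem_lists_iff]; rfl

theorem mem_arr' {α : Type*} [DecidableEq α] {S : Finset α} {l : List α} :
    l ∈ arr S ↔ l.Nodup ∧ l.toFinset = S := by
  rw [mem_arr]
  constructor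
  · intro h
    have hn : l.Nodup := by
      have := S.nodup; rw [h] at this; exact_mod_cast this
    refine ⟨hn, ?_⟩
    apply Finset.eq_of_veq
    rw [h, List.toFinset_val, hn.dedup]
  · rintro ⟨hn, rfl⟩
    rw [List.toFinset_val, hn.dedup]

section
variable {F : Type*} [Field F]

theorem wt_map {α β : Type*} [LinearOrder α] [LinearOrder β] (w : ℕ → F) (f : α ↪o β)
    (l : List α) : wt w (l.map f) = wt w l := by
  have : (l.map f).splitBy (fun a b => decide (a < b)) =
      (l.splitBy (fun a b => decide (a < b))).map (List.map f) := by
    rw [List.splitBy_eq_iff]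
    refine ⟨?_, ?_, ?_, ?_⟩
    · rw [← List.map_flatten, List.flatten_splitBy]
    · intro h
      rw [List.mem_map] at h
      obtain ⟨x, hx, hx'⟩ := h
      exact List.ne_nil_of_mem_splitBy hx (List.map_eq_nil_iff.1 hx')
    · intro m hm
      rw [List.mem_map] at hm
      obtain ⟨x, hx, rfl⟩ := hm
      have := List.isChain_of_mem_splitBy hx
      rw [List.isChain_map]
      simpa using this
    · rw [List.isChain_map]
      refine (List.isChain_getLast_head_splitBy _ l).imp ?_
      rintro a b ⟨ha, hb, h⟩
      refine ⟨by simpa using ha, by simpa using hb, ?_⟩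
      simpa [List.getLast_map, List.head_map] using h
  unfold wt
  rw [this]
  simp [Function.comp_def]

theorem wt_append {α : Type*} [LinearOrder α] (w : ℕ → F) (h0 : w 0 = 1) (r t : List α)
    (hr : r.IsChain (· < ·)) (ht : ∀ x ∈ r.getLast?, ∀ y ∈ t.head?, ¬ x < y) :
    wt w (r ++ t) = w r.length * wt w t := by
  unfold wt
  rw [List.splitBy_append (by simpa using ht)]
  by_cases h : r = []
  · subst h; simp [h0]
  · rw [List.splitBy_of_isChain h (by simpa using hr)]
    simp

theorem exists_first_run {α : Type*} [LinearOrder α] (l : List α) (hl : l ≠ []) :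
    ∃ r t : List α, r ≠ [] ∧ l = r ++ t ∧ r.IsChain (· < ·) ∧
      (∀ x ∈ r.getLast?, ∀ y ∈ t.head?, ¬ x < y) := by
  have h := (List.splitBy_eq_iff (m := l) (r := fun a b => decide (a < b))).1 rfl
  cases hs : l.splitBy (fun a b => decide (a < b)) with
  | nil => exact absurd (List.splitBy_eq_nil.1 hs) hl
  | cons r gs =>
    rw [hs] at h
    obtain ⟨h1, h2, h3, h4⟩ := h
    refine ⟨r, gs.flatten, fun h => h2 (by simp [h]), by simpa using h1,
      by simpa using h3 r (by simp), ?_⟩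
    cases gs with
    | nil => simp
    | cons g gs =>
      rw [List.isChain_cons_cons] at h4
      obtain ⟨⟨ha, hb, h⟩, -⟩ := h4
      intro x hx y hy
      rw [List.flatten_cons, List.head?_append_of_ne_nil _ hb] at hy
      rw [← List.getLast_of_mem_getLast? hx, ← List.head_of_mem_head? hy]
      simpa using h

theorem cancel {α : Type*} [LinearOrder α] (a w : ℕ → F) (h0 : w 0 = 1)
    (haw : ∀ m, m ≠ 0 → ∑ k ∈ Finset.range (m + 1), a k * w (m - k) = 0)
    (l : List α) (hl : l ≠ []) :
    ∑ k ∈ Finset.range (l.length + 1),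
      (if (l.take k).IsChain (· < ·) then a k * wt w (l.drop k) else 0) = 0 := by
  obtain ⟨r, t, hr, rfl, hc, hb⟩ := exists_first_run l hl
  have hsub : Finset.range (r.length + 1) ⊆ Finset.range ((r ++ t).length + 1) := by
    intro k; simp; omega
  rw [← Finset.sum_subset hsub]
  · have : ∀ k ∈ Finset.range (r.length + 1),
      (if ((r ++ t).take k).IsChain (· < ·) then a k * wt w ((r ++ t).drop k) else 0)
        = a k * w (r.length - k) * wt w t := by
      intro k hk
      have hk : k ≤ r.length := by simp at hk; omega
      rw [List.take_append_of_le_length hk, List.drop_append_of_le_length hk,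
        if_pos (hc.take k), wt_append w h0 _ _ (hc.drop k), List.length_drop, mul_assoc]
      intro x hx
      apply hb
      rw [List.getLast?_drop] at hx
      split_ifs at hx
      · simp at hx
      · exact hx
    rw [Finset.sum_congr rfl this, ← Finset.sum_mul, haw _ (by simpa using hr), zero_mul]
  · intro k hk hk'
    rw [if_neg]
    intro h
    have hk' : r.length < k := by simpa using hk'
    have hk : k ≤ r.length + t.length := by simp at hk; omega
    rw [List.take_append, List.take_of_length_le hk'.le] at h
    rw [List.isChain_append] at h
    obtain ⟨-, -, h⟩ := h
    cases t with
    | nil => simp at hk; omega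
    | cons y t =>
      refine hb (r.getLast hr) (List.getLast_mem_getLast? hr) y (by simp) ?_
      refine h _ (List.getLast_mem_getLast? hr) y ?_
      obtain ⟨j, hj⟩ : ∃ j, k - r.length = j + 1 := ⟨k - r.length - 1, by omega⟩
      simp [hj]

theorem sum_arr {α : Type*} [LinearOrder α] (w : ℕ → F) (S : Finset α) {n : ℕ}
    (hS : S.card = n) :
    ∑ l ∈ arr S, wt w l = ∑ σ : Equiv.Perm (Fin n), wt w (List.ofFn fun i => σ i) := by
  symm
  refine Finset.sum_bij (fun σ _ => (List.ofFn fun i => σ i).map (S.orderEmbOfFin hS)) ?_ ?_ ?_ ?_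
  · intro σ _
    rw [mem_arr']
    constructor
    · apply List.Nodup.map (S.orderEmbOfFin hS).injective
      exact List.nodup_ofFn.2 σ.injective
    · ext x
      have := Finset.range_orderEmbOfFin S hS
      rw [← Finset.mem_coe (s := S), ← this]
      simp only [List.mem_toFinset, List.mem_map, List.mem_ofFn, Set.mem_range]
      constructor
      · rintro ⟨y, -, rfl⟩; exact ⟨y, rfl⟩
      · rintro ⟨y, rfl⟩; exact ⟨y, ⟨σ.symm y, by simp⟩, rfl⟩
  · intro σ _ τ _ h
    have h := (List.map_injective_iff.2 (S.orderEmbOfFin hS).injective) h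
    have h := List.ofFn_injective h
    ext i; exact congrArg Fin.val (congrFun h i)
  · intro l hl
    have hlen : l.length = n := by
      have := congrArg Multiset.card (mem_arr.1 hl)
      simp at this; omega
    rw [mem_arr'] at hl
    subst hlen
    have hmem : ∀ i : Fin l.length, l.get i ∈ S := by
      intro i; rw [← hl.2]; simp
    let f : Fin l.length → Fin l.length := fun i => (S.orderIsoOfFin hS).symm ⟨l.get i, hmem i⟩
    have hf : Function.Injective f := by
      intro i j h
      have := (S.orderIsoOfFin hS).symm.injective h
      exact (List.nodup_iff_injective_get.1 hl.1) (by simpa using this)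
    refine ⟨Equiv.ofBijective f (Finite.injective_iff_bijective.1 hf), Finset.mem_univ _, ?_⟩
    rw [List.map_ofFn]
    conv_rhs => rw [← List.ofFn_get l]
    congr 1
    funext i
    simp only [Function.comp, Equiv.ofBijective_apply, f]
    rw [← Finset.coe_orderIsoOfFin_apply]
    simp
  · intro σ _
    rw [wt_map]

theorem sum_take {α : Type*} [LinearOrder α] (g : List α → F) (S : Finset α) (k : ℕ)
    (hk : k ≤ S.card) :
    ∑ l ∈ arr S, (if (l.take k).IsChain (· < ·) then g (l.drop k) else 0) =
      ∑ T ∈ S.powersetCard k, ∑ l ∈ arr (S \ T), g l := by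
  rw [← Finset.sum_filter, Finset.sum_sigma']
  refine Finset.sum_bij' (fun l _ => ⟨(l.take k).toFinset, l.drop k⟩)
    (fun p _ => p.1.sort ++ p.2) ?_ ?_ ?_ ?_ ?_
  · intro l hl
    rw [Finset.mem_filter, mem_arr'] at hl
    obtain ⟨⟨hn, rfl⟩, hc⟩ := hl
    rw [List.toFinset_card_of_nodup hn] at hk
    rw [Finset.mem_sigma, Finset.mem_powersetCard, mem_arr']
    have hd := hn
    rw [← List.take_append_drop k l, List.nodup_append] at hd
    refine ⟨⟨?_, ?_⟩, hd.2.1, ?_⟩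
    · intro x hx
      rw [List.mem_toFinset] at hx ⊢
      exact List.mem_of_mem_take hx
    · rw [List.toFinset_card_of_nodup hd.1, List.length_take]; omega
    · ext x
      simp only [List.mem_toFinset, Finset.mem_sdiff]
      have hx : x ∈ l ↔ x ∈ l.take k ∨ x ∈ l.drop k := by
        rw [← List.mem_append, List.take_append_drop]
      have := hd.2.2 x
      grind
  · rintro ⟨T, l⟩ h
    rw [Finset.mem_sigma, Finset.mem_powersetCard, mem_arr'] at h
    obtain ⟨⟨h1, h2⟩, h3, h4⟩ := h
    simp only at *
    rw [Finset.mem_filter, mem_arr']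
    refine ⟨⟨?_, ?_⟩, ?_⟩
    · rw [List.nodup_append]
      refine ⟨Finset.sort_nodup _ _, h3, ?_⟩
      intro x hx y hy
      rw [← List.mem_toFinset, h4] at hy
      rw [Finset.mem_sort] at hx
      rintro rfl
      simp [hx] at hy
    · rw [List.toFinset_append, h4, Finset.sort_toFinset, Finset.union_sdiff_of_subset h1]
    · rw [List.take_left' (by simpa using h2)]
      exact (Finset.sortedLT_sort T).isChain
  · intro l hl
    rw [Finset.mem_filter, mem_arr'] at hl
    obtain ⟨⟨hn, rfl⟩, hc⟩ := hl
    simp only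
    rw [(List.toFinset_sort _ (hn.sublist (List.take_sublist k l))).2, List.take_append_drop]
    exact (List.isChain_iff_pairwise.1 hc).imp le_of_lt
  · rintro ⟨T, l⟩ h
    rw [Finset.mem_sigma, Finset.mem_powersetCard, mem_arr'] at h
    obtain ⟨⟨h1, h2⟩, h3, h4⟩ := h
    simp only at *
    rw [List.take_left' (by simpa using h2), List.drop_left' (by simpa using h2),
      Finset.sort_toFinset]
  · intro l hl
    rfl

theorem sum_comp (w : ℕ → F) (n : ℕ) :
    ∑ L : Composition n, (L.blocks.map w).prod * (runCount L : F) =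
      ∑ σ : Equiv.Perm (Fin n), wt w (List.ofFn fun i => σ i) := by
  classical
  let c : Equiv.Perm (Fin n) → Composition n := fun σ =>
    { blocks := runComposition σ
      blocks_pos := by
        intro i hi
        unfold runComposition at hi
        rw [List.mem_map] at hi
        obtain ⟨x, hx, rfl⟩ := hi
        exact List.length_pos_iff.2 (List.ne_nil_of_mem_splitBy hx)
      blocks_sum := by
        unfold runComposition
        rw [← List.length_flatten, List.flatten_splitBy, List.length_ofFn] }
  rw [← Finset.sum_fiberwise (s := Finset.univ) (g := c)]
  refine Finset.sum_congr rfl fun L _ => ?_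
  have hc : ∀ σ, c σ = L ↔ runComposition σ = L.blocks := fun σ => Composition.ext_iff
  have : ∀ σ ∈ Finset.univ.filter (fun σ => c σ = L),
      wt w (List.ofFn fun i => σ i) = (L.blocks.map w).prod := by
    intro σ hσ
    rw [Finset.mem_filter, hc] at hσ
    rw [← hσ.2]; rfl
  rw [Finset.sum_congr rfl this, Finset.sum_const, nsmul_eq_mul, mul_comm]
  congr 2
  unfold runCount
  rw [Nat.card_eq_fintype_card, Fintype.card_subtype]
  congr 1
  ext σ
  simp [hc]

theorem main (a w : ℕ → F) (h0 : w 0 = 1)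
    (haw : ∀ m, m ≠ 0 → ∑ k ∈ Finset.range (m + 1), a k * w (m - k) = 0) (n : ℕ) (hn : n ≠ 0) :
    ∑ k ∈ Finset.range (n + 1), (n.choose k : F) * (a k *
      ∑ σ : Equiv.Perm (Fin (n - k)), wt w (List.ofFn fun i => σ i)) = 0 := by
  have key : ∀ k ∈ Finset.range (n + 1), (n.choose k : F) * (a k *
      ∑ σ : Equiv.Perm (Fin (n - k)), wt w (List.ofFn fun i => σ i)) =
      ∑ l ∈ arr (Finset.univ : Finset (Fin n)),
        (if (l.take k).IsChain (· < ·) then a k * wt w (l.drop k) else 0) := by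
    intro k hk
    have hk : k ≤ n := by simp at hk; omega
    rw [sum_take (fun l => a k * wt w l) _ _ (by simpa using hk)]
    have : ∀ T ∈ (Finset.univ : Finset (Fin n)).powersetCard k,
        ∑ l ∈ arr (Finset.univ \ T), a k * wt w l =
        a k * ∑ σ : Equiv.Perm (Fin (n - k)), wt w (List.ofFn fun i => σ i) := by
      intro T hT
      rw [Finset.mem_powersetCard] at hT
      rw [← Finset.mul_sum, sum_arr w (n := n - k)]
      rw [Finset.card_sdiff_of_subset hT.1, hT.2]; simp
    rw [Finset.sum_congr rfl this, Finset.sum_const, nsmul_eq_mul, Finset.card_powersetCard]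
    simp
  rw [Finset.sum_congr rfl key, Finset.sum_comm]
  refine Finset.sum_eq_zero fun l hl => ?_
  have hlen : l.length = n := by
    have := congrArg Multiset.card (mem_arr.1 hl)
    simp at this; omega
  have := cancel a w h0 haw l (by rintro rfl; simp at hlen; omega)
  have hr : Finset.range (n + 1) = Finset.range (l.length + 1) := by rw [hlen]
  rw [hr]
  exact this

end

end RunThm

/-- the Run Theorem, power series version. Over a field `F` of
characteristic `0`, let `a₀ = 1` and define `(wₙ)` by `(∑ aₙ xⁿ)⁻¹ = ∑ wₙ xⁿ`. Then
`(∑ aₙ xⁿ/n!)⁻¹ = ∑ bₙ xⁿ/n!` where `bₙ = ∑_{L ⊨ n} w_L · β(L)`, the sum over all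
compositions `L` of `n`, with `w_L = w_{L₁} ⋯ w_{L_k}` and `β(L)` the number of
permutations of `{1, ..., n}` whose run composition is `L`. -/
theorem stmt10 (F : Type*) [Field F] [CharZero F] (a w : ℕ → F) (ha : a 0 = 1)
    (hw : (PowerSeries.mk a)⁻¹ = PowerSeries.mk w) :
    (PowerSeries.mk fun n => a n / n.factorial)⁻¹
      = PowerSeries.mk fun n =>
          (∑ L : Composition n, (L.blocks.map w).prod * (runCount L : F)) / n.factorial := by
  have hA : PowerSeries.constantCoeff (PowerSeries.mk a) ≠ 0 := by
    rw [← PowerSeries.coeff_zero_eq_constantCoeff_apply, PowerSeries.coeff_mk, ha]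
    exact one_ne_zero
  have hmul := PowerSeries.mul_inv_cancel _ hA
  rw [hw] at hmul
  have hco : ∀ m, ∑ k ∈ Finset.range (m + 1), a k * w (m - k) = if m = 0 then 1 else 0 := by
    intro m
    have := congrArg (PowerSeries.coeff m) hmul
    rw [PowerSeries.coeff_mul, Finset.Nat.sum_antidiagonal_eq_sum_range_succ_mk,
      PowerSeries.coeff_one] at this
    simpa using this
  have h0 : w 0 = 1 := by simpa [ha] using hco 0
  rw [PowerSeries.inv_eq_iff_mul_eq_one]
  swap
  · rw [← PowerSeries.coeff_zero_eq_constantCoeff_apply, PowerSeries.coeff_mk, ha]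
    simp
  rw [mul_comm]
  ext n
  rw [PowerSeries.coeff_mul, Finset.Nat.sum_antidiagonal_eq_sum_range_succ_mk,
    PowerSeries.coeff_one]
  simp only [PowerSeries.coeff_mk, RunThm.sum_comp]
  split_ifs with hn
  · subst hn
    simp [ha, RunThm.wt]
  · have := RunThm.main a w h0 (fun m hm => by rw [hco, if_neg hm]) n hn
    have hf : ∀ m : ℕ, (m.factorial : F) ≠ 0 := fun m => by exact_mod_cast m.factorial_ne_zero
    apply (mul_right_inj' (hf n)).1
    rw [mul_zero, ← this, Finset.mul_sum]
    refine Finset.sum_congr rfl fun k hk => ?_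
    have hk : k ≤ n := by simp at hk; omega
    rw [Nat.cast_choose F hk]
    have := hf k
    have := hf (n - k)
    field_simp
end

section
/- Let r ≥ 2 be an integer. Define (c_n) by (Σ_{k≥0} (x^{kr}/(kr)! - x^{kr+1}/(kr+1)!))^{-1} = Σ_{n≥0} c_n x^n/n! in ℚ[[x]], i.e. the reciprocal of 1 - x + x^r/r! - x^{r+1}/(r+1)! + x^{2r}/(2r)! - x^{2r+1}/(2r+1)! + ⋯. Then for every n ≥ 0, c_n equals the number of permutations of {1, ..., n} all of whose maximal increasing runs have length at most r - 1. -/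
/-- The list of lengths of the maximal increasing runs (read left to right) of the word
`σ(1) σ(2) ⋯ σ(n)` associated to a permutation `σ` of `{1, ..., n}`. -/
def runLengths {n : ℕ} (σ : Equiv.Perm (Fin n)) : List ℕ :=
  ((List.ofFn fun i => σ i).splitBy fun a b => decide (a < b)).map List.length

namespace DB
open Finset

/-- signs -/
def aa (r k : ℕ) : ℚ := if k % r = 0 then 1 else if k % r = 1 then -1 else 0

lemma prefix_sum (r : ℕ) (hr : 2 ≤ r) (j : ℕ) :
    ∑ k ∈ range j, aa r k = if j % r = 1 then 1 else 0 := by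
  induction j with
  | zero => simp
  | succ j ih =>
    rw [sum_range_succ, ih, aa]
    have h1 : j % r < r := Nat.mod_lt _ (by omega)
    have h2 : (j + 1) % r = if j % r + 1 = r then 0 else j % r + 1 := by
      rw [Nat.add_mod, Nat.mod_eq_of_lt (show 1 < r by omega)]
      split_ifs with h
      · rw [h, Nat.mod_self]
      · exact Nat.mod_eq_of_lt (by omega)
    rw [h2]
    by_cases e0 : j % r = 0
    · have : ¬ (0 + 1 = r) := by omega
      simp [e0, this]
    · by_cases e1 : j % r = 1
      · by_cases e2 : 1 + 1 = r
        · simp [e1, e2]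
        · simp [e1, e2]
      · simp [e0, e1]
        split_ifs <;> simp [e0]

lemma window_sum (r : ℕ) (hr : 2 ≤ r) (n m : ℕ) (h1 : 1 ≤ m) (h2 : m ≤ n) :
    ∑ k ∈ range (n+1), (if k ≤ m ∧ m - k ≤ r - 1 then aa r k else 0) = 0 := by
  rw [← sum_filter]
  have : (range (n+1)).filter (fun k => k ≤ m ∧ m - k ≤ r - 1) = Ico (m+1-r) (m+1) := by
    ext k; simp; omega
  rw [this, sum_Ico_eq_sub _ (by omega), prefix_sum r hr, prefix_sum r hr]
  rcases Nat.lt_or_ge m r with h | h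
  · have e : m + 1 - r = 0 := by omega
    rw [e]
    rcases Nat.lt_or_ge (m+1) r with h' | h'
    · rw [Nat.mod_eq_of_lt h']; simp; omega
    · have : m + 1 = r := by omega
      simp [this]
  · have : (m + 1 - r) % r = (m+1) % r := (Nat.mod_eq_sub_mod (by omega)).symm
    rw [this]; simp

variable {α : Type*} [LinearOrder α]

/-- goodness -/
def good (r : ℕ) (l : List α) : Prop :=
  ∀ x ∈ (l.splitBy fun a b => decide (a < b)).map List.length, x ≤ r - 1

lemma exists_run (l : List α) (hl : l ≠ []) : ∃ u v, l = u ++ v ∧ u ≠ [] ∧ u.IsChain (· < ·) ∧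
    ∀ x ∈ u.getLast?, ∀ y ∈ v.head?, ¬ x < y := by
  induction l with
  | nil => exact absurd rfl hl
  | cons a l ih =>
    rcases l with _ | ⟨b, l⟩
    · exact ⟨[a], [], by simp⟩
    · by_cases hab : a < b
      · obtain ⟨u, v, e, hu, hc, hx⟩ := ih (by simp)
        rcases u with _ | ⟨c, u⟩
        · exact absurd rfl hu
        · simp only [List.cons_append, List.cons.injEq] at e
          obtain ⟨rfl, rfl⟩ := e
          refine ⟨a :: b :: u, v, by simp, by simp, ?_, ?_⟩
          · rw [List.isChain_cons_cons]; exact ⟨hab, hc⟩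
          · simpa using hx
      · exact ⟨[a], b :: l, by simp, by simp, by simp, by simpa using hab⟩

open Classical in
lemma word_sum (r : ℕ) (hr : 2 ≤ r) (l : List α) (hl : l ≠ []) :
    ∑ k ∈ range (l.length+1),
      (if (l.take k).IsChain (· < ·) ∧ good r (l.drop k) then aa r k else 0) = 0 := by
  obtain ⟨u, v, rfl, hu, hc, hx⟩ := exists_run l hl
  have hup : 1 ≤ u.length := List.length_pos_iff.2 hu
  have htake : ∀ k, ((u ++ v).take k).IsChain (· < ·) → k ≤ (u++v).length → k ≤ u.length := by
    intro k hk hk2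
    by_contra! hlt
    rw [List.take_append, List.take_of_length_le hlt.le, List.isChain_append] at hk
    rcases v with _ | ⟨y, v⟩
    · simp at hk2; omega
    · have := hk.2.2 (u.getLast hu) (List.getLast_mem_getLast? hu) y
        (by rw [show k - u.length = (k - u.length - 1) + 1 by omega]; simp)
      exact hx _ (List.getLast_mem_getLast? hu) y (by simp) this
  have htake2 : ∀ k, k ≤ u.length → ((u ++ v).take k).IsChain (· < ·) := by
    intro k hk
    rw [List.take_append_of_le_length hk]
    exact hc.take k
  have hdrop : ∀ k, k ≤ u.length →
      (good r ((u++v).drop k) ↔ (u.length - k ≤ r - 1 ∧ good r v)) := by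
    intro k hk
    rw [List.drop_append_of_le_length hk]
    rcases hk.eq_or_lt with rfl | hk
    · simp
    · have hne : u.drop k ≠ [] := by simp; omega
      have hs : (u.drop k ++ v).splitBy (fun a b => decide (a < b))
          = [u.drop k] ++ v.splitBy (fun a b => decide (a < b)) := by
        rw [List.splitBy_append, List.splitBy_of_isChain hne]
        · simpa using hc.drop k
        · intro x hx' y hy
          rw [List.getLast?_drop, if_neg (by omega)] at hx'
          simpa using hx x hx' y hy
      unfold good
      rw [hs]
      simp
  by_cases hg : good r v
  · refine Eq.trans (sum_congr rfl ?_) (window_sum r hr (u++v).length u.length hup (by simp))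
    intro k hk
    rw [mem_range] at hk
    congr 1
    apply propext
    constructor
    · rintro ⟨h1, h2⟩
      have h3 := htake k h1 (by omega)
      exact ⟨h3, ((hdrop k h3).1 h2).1⟩
    · rintro ⟨h1, h2⟩
      exact ⟨htake2 k h1, (hdrop k h1).2 ⟨h2, hg⟩⟩
  · apply sum_eq_zero
    intro k hk
    rw [mem_range] at hk
    rw [if_neg]
    rintro ⟨h1, h2⟩
    exact hg ((hdrop k (htake k h1 (by omega))).1 h2).2

/-- arrangements -/
noncomputable def arr (S : Finset α) : Finset (List α) := S.toList.permutations.toFinset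

lemma mem_arr {S : Finset α} {l : List α} : l ∈ arr S ↔ l.Nodup ∧ l.toFinset = S := by
  simp only [arr, List.mem_toFinset, List.mem_permutations]
  constructor
  · intro h
    exact ⟨h.nodup_iff.2 S.nodup_toList, by rw [List.toFinset_eq_of_perm _ _ h, S.toList_toFinset]⟩
  · rintro ⟨h, rfl⟩
    exact (List.toFinset_toList h).symm

open Classical in
/-- number of good arrangements -/
noncomputable def cnt (r : ℕ) (S : Finset α) : ℕ := ((arr S).filter (good r)).card

open Classical in
lemma rec_cnt (r : ℕ) (hr : 2 ≤ r) (S : Finset α) (hS : S.Nonempty) :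
    ∑ T ∈ S.powerset, aa r T.card * (cnt r (S \ T) : ℚ) = 0 := by
  have h1 : ∀ T ∈ S.powerset, aa r T.card * (cnt r (S \ T) : ℚ)
      = ∑ l ∈ (arr (S \ T)).filter (good r), aa r T.card := by
    intro T _
    rw [sum_const, cnt, nsmul_eq_mul, mul_comm]
  rw [sum_congr rfl h1, sum_sigma']
  have h2 : ∑ l ∈ arr S, ∑ k ∈ (range (S.card+1)).filter
      (fun k => (l.take k).IsChain (· < ·) ∧ good r (l.drop k)), aa r k = 0 := by
    apply sum_eq_zero
    intro l hl
    rw [mem_arr] at hl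
    have hlen : S.card = l.length := by rw [← hl.2, List.toFinset_card_of_nodup hl.1]
    rw [sum_filter, hlen]
    apply word_sum r hr
    rintro rfl
    simp at hl
    simp [← hl] at hS
  rw [← h2, sum_sigma']
  refine sum_bij' (fun p _ => ⟨p.1.sort ++ p.2, p.1.card⟩)
    (fun q _ => ⟨(q.1.take q.2).toFinset, q.1.drop q.2⟩) ?_ ?_ ?_ ?_ ?_
  · rintro ⟨T, l⟩ h
    simp only [mem_sigma, mem_powerset, mem_filter, mem_arr] at h
    obtain ⟨hT, ⟨hn, hl⟩, hg⟩ := h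
    simp only [mem_sigma, mem_filter, mem_arr, mem_range]
    refine ⟨⟨?_, ?_⟩, ?_, ?_, ?_⟩
    · rw [List.nodup_append']
      refine ⟨T.sort_nodup _, hn, ?_⟩
      intro x hx hx2
      have : x ∈ S \ T := by rw [← hl]; simpa using hx2
      simp at hx this
      exact this.2 hx
    · rw [List.toFinset_append, sort_toFinset, hl]
      exact union_sdiff_of_subset hT
    · have := card_le_card hT; omega
    · rw [List.take_left' (by simp)]
      exact (sortedLT_sort T).isChain
    · rw [List.drop_left' (by simp)]
      exact hg
  · rintro ⟨l, k⟩ h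
    simp only [mem_sigma, mem_filter, mem_arr, mem_range] at h
    obtain ⟨⟨hn, rfl⟩, hk, hc, hg⟩ := h
    simp only [mem_sigma, mem_powerset, mem_filter, mem_arr]
    have hd := hn
    rw [← List.take_append_drop k l, List.nodup_append'] at hd
    refine ⟨?_, ⟨hd.2.1, ?_⟩, hg⟩
    · intro x hx
      simp only [List.mem_toFinset] at hx ⊢
      exact List.mem_of_mem_take hx
    · ext x
      have e : x ∈ l ↔ x ∈ l.take k ∨ x ∈ l.drop k := by
        rw [← List.mem_append, List.take_append_drop]
      have hd3 := @hd.2.2 x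
      simp only [mem_sdiff, List.mem_toFinset]
      tauto
  · rintro ⟨T, l⟩ h
    simp [List.take_left', List.drop_left']
  · rintro ⟨l, k⟩ h
    simp only [mem_sigma, mem_filter, mem_arr, mem_range] at h
    obtain ⟨⟨hn, rfl⟩, hk, hc, hg⟩ := h
    have hd := hn
    rw [← List.take_append_drop k l, List.nodup_append'] at hd
    rw [List.toFinset_card_of_nodup hn] at hk
    have e : (l.take k).toFinset.sort = l.take k := by
      rw [List.toFinset_sort (r := (· ≤ ·)) hd.1]
      exact (hc.pairwise).imp le_of_lt
    simp only [e, List.take_append_drop, List.toFinset_card_of_nodup hd.1, List.length_take]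
    rw [min_eq_left (by omega)]
  · rintro ⟨T, l⟩ h
    rfl

lemma cnt_empty (r : ℕ) : cnt r (∅ : Finset α) = 1 := by
  unfold cnt
  rw [card_eq_one]
  refine ⟨[], ?_⟩
  ext l
  simp only [mem_filter, mem_arr, mem_singleton]
  constructor
  · rintro ⟨⟨_, h⟩, _⟩
    simpa using h
  · rintro rfl
    simp [good]

lemma cnt_eq (r : ℕ) (hr : 2 ≤ r) (c : ℕ → ℚ) (h0 : c 0 = 1)
    (hc : ∀ n, 1 ≤ n → ∑ k ∈ range (n+1), (n.choose k : ℚ) * (aa r k * c (n - k)) = 0)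
    (n : ℕ) : ∀ S : Finset α, S.card = n → (cnt r S : ℚ) = c n := by
  induction n using Nat.strong_induction_on with
  | _ n ih =>
    intro S hS
    rcases Nat.eq_zero_or_pos n with rfl | hn
    · rw [card_eq_zero] at hS
      rw [hS, cnt_empty, h0]; simp
    · have h1 := rec_cnt r hr S (card_pos.1 (by omega))
      have h2 := hc n hn
      have h3 : ∑ T ∈ S.powerset, aa r T.card * c (n - T.card) = 0 := by
        rw [sum_powerset_apply_card (fun k => aa r k * c (n - k)), hS]
        simpa using h2
      have he : ∅ ∈ S.powerset := by simp
      rw [← add_sum_erase _ _ he] at h1 h3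
      have h4 : ∑ T ∈ S.powerset.erase ∅, aa r T.card * (cnt r (S \ T) : ℚ) =
          ∑ T ∈ S.powerset.erase ∅, aa r T.card * c (n - T.card) := by
        apply sum_congr rfl
        intro T hT
        simp only [mem_erase, mem_powerset] at hT
        have hp : 0 < T.card := card_pos.2 (nonempty_iff_ne_empty.2 hT.1)
        rw [ih (n - T.card) (by omega) (S \ T) (by rw [card_sdiff_of_subset hT.2, hS])]
      rw [h4] at h1
      simp [aa] at h1 h3
      linarith

lemma card_perm (r n : ℕ) : Nat.card {σ : Equiv.Perm (Fin n) // ∀ l ∈ runLengths σ, l ≤ r - 1}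
    = cnt r (univ : Finset (Fin n)) := by
  classical
  rw [Nat.card_eq_fintype_card, Fintype.card_subtype, cnt]
  refine card_bij (fun σ _ => List.ofFn fun i => σ i) ?_ ?_ ?_
  · intro σ h
    simp only [mem_filter, mem_univ, true_and, mem_arr] at h ⊢
    refine ⟨⟨List.nodup_ofFn.2 σ.injective, ?_⟩, h⟩
    ext x
    simp only [List.mem_toFinset, List.mem_ofFn, mem_univ, iff_true]
    exact σ.surjective x
  · intro σ _ τ _ h
    exact Equiv.ext (congrFun (List.ofFn_injective h))
  · intro l h
    simp only [mem_filter, mem_arr] at h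
    obtain ⟨⟨hn, hu⟩, hg⟩ := h
    have hlen : l.length = n := by
      rw [← List.toFinset_card_of_nodup hn, hu]; simp
    have hinj : Function.Injective l.get := List.nodup_iff_injective_get.1 hn
    let σ := Equiv.ofBijective (fun i : Fin n => l.get (i.cast hlen.symm))
      (Finite.injective_iff_bijective.1 (hinj.comp (Fin.cast_injective hlen.symm)))
    have e : (List.ofFn fun i => σ i) = l := by
      apply List.ext_getElem
      · simp [hlen]
      · intro i h1 h2
        simp [σ]
    refine ⟨σ, ?_, e⟩
    simp only [mem_filter, mem_univ, true_and]
    unfold runLengths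
    rw [e]
    exact hg

end DB

/-- David–Barton. For `r ≥ 2`, the coefficients `c n` of the reciprocal
of `∑_{k ≥ 0} (x^{kr}/(kr)! - x^{kr+1}/(kr+1)!)`, i.e. of
`1 - x + x^r/r! - x^{r+1}/(r+1)! + x^{2r}/(2r)! - ⋯`, written as `∑ cₙ xⁿ/n!`, count the
permutations of `{1, ..., n}` all of whose maximal increasing runs have length at most
`r - 1`. -/
theorem stmt14 (r : ℕ) (hr : 2 ≤ r) (c : ℕ → ℚ)
    (hc : (PowerSeries.mk fun n =>
          if n % r = 0 then (1 : ℚ) / n.factorial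
          else if n % r = 1 then -((1 : ℚ) / n.factorial)
          else 0)⁻¹
        = PowerSeries.mk fun n => c n / n.factorial) :
    ∀ n, c n = (Nat.card {σ : Equiv.Perm (Fin n) //
        ∀ l ∈ runLengths σ, l ≤ r - 1} : ℚ) := by
  intro n
  rw [DB.card_perm]
  have h0 : PowerSeries.constantCoeff (PowerSeries.mk fun n =>
          if n % r = 0 then (1 : ℚ) / n.factorial
          else if n % r = 1 then -((1 : ℚ) / n.factorial)
          else 0) ≠ 0 := by
    rw [← PowerSeries.coeff_zero_eq_constantCoeff_apply]
    simp
  have h1 := PowerSeries.mul_inv_cancel _ h0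
  rw [hc] at h1
  have key : ∀ n, ∑ k ∈ Finset.range (n+1), (n.choose k : ℚ) * (DB.aa r k * c (n - k))
      = if n = 0 then 1 else 0 := by
    intro n
    have h2 := congrArg (PowerSeries.coeff n) h1
    rw [PowerSeries.coeff_mul, Finset.Nat.sum_antidiagonal_eq_sum_range_succ_mk,
      PowerSeries.coeff_one] at h2
    have h3 := congrArg (fun x => (n.factorial : ℚ) * x) h2
    simp only [Finset.mul_sum, PowerSeries.coeff_mk] at h3
    have h4 : (n.factorial : ℚ) * (if n = 0 then 1 else 0) = if n = 0 then 1 else 0 := by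
      split_ifs with h
      · simp [h]
      · simp
    rw [← h4, ← h3]
    apply Finset.sum_congr rfl
    intro k hk
    rw [Finset.mem_range] at hk
    have hf1 : (k.factorial : ℚ) ≠ 0 := by exact_mod_cast k.factorial_ne_zero
    have hf2 : ((n-k).factorial : ℚ) ≠ 0 := by exact_mod_cast (n-k).factorial_ne_zero
    rw [Nat.cast_choose ℚ (show k ≤ n by omega), DB.aa]
    split_ifs <;> field_simp <;> simp
  symm
  refine DB.cnt_eq r hr c ?_ ?_ n _ (by simp)
  · have := key 0
    simpa [DB.aa] using this
  · intro m hm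
    rw [key m, if_neg (by omega)]
end
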